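/- arXiv:math/0211370 — 4 statements merged into one kernel-verified Lean document; each statement's English description precedes it below -/
import Mathlib

section
/- Let n ≥ 1 and let A, B, H be n×n complex Hermitian matrices such that A is positive definite, B − A is positive semidefinite (hence B is also positive definite), and H is positive semidefinite. Then Re(tr(A⁻¹·H)) · Re(det A) ≤ Re(tr(B⁻¹·H)) · Re(det B). (For such matrices the traces tr(A⁻¹H), tr(B⁻¹H) and the determinants det A, det B are real and nonnegative.) -/
/-!
The quantity `tr (M⁻¹ H) · det M` is evaluated in a basis diagonalizing `A` and `B`
simultaneously. As `A` is positive definite and `B - A` is positive semidefinite, there is an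
invertible `T` with `A = T Tᴴ` and `B = T diag(d) Tᴴ`, where every `d i ≥ 1`
(`exists_simultaneous_diagonalization`). Put `K = T⁻¹ H T⁻ᴴ`, which is positive semidefinite and
so has diagonal entries `k i ≥ 0`. Then `tr (B⁻¹ H) = ∑ k i / d i` and
`det B = |det T|² ∏ d j` (`trace_inv_conj_diagonal_mul`, `det_conj_diagonal`), while the same
formulas with `d = 1` describe `A`. The claim becomes
`∑ k i ≤ ∑ k i (∏ j, d j) / d i`, which holds termwise because `d i ≤ ∏ j, d j`.
-/

open scoped ComplexOrder

open Matrix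

/-- A positive definite `A` and a Hermitian `B ≥ A` are simultaneously diagonal under congruence.
The matrix `T` is `Rᴴ U`, where `A = Rᴴ R` and `U` is a unitary matrix diagonalizing
`R⁻ᴴ (B - A) R⁻¹`; the numbers `d i - 1` are the eigenvalues of that matrix. -/
lemma exists_simultaneous_diagonalization {n : ℕ} {A B : Matrix (Fin n) (Fin n) ℂ}
    (hA : A.PosDef) (hBA : (B - A).PosSemidef) :
    ∃ (T : Matrix (Fin n) (Fin n) ℂ) (d : Fin n → ℝ), IsUnit T.det ∧ (∀ i, 1 ≤ d i) ∧
      A = T * Tᴴ ∧ B = T * diagonal (fun i => (d i : ℂ)) * Tᴴ := by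
  obtain ⟨R, hR⟩ : ∃ R : Matrix (Fin n) (Fin n) ℂ, A = Rᴴ * R := by
    open scoped MatrixOrder Matrix.Norms.L2Operator in
    exact CStarAlgebra.nonneg_iff_eq_star_mul_self.mp hA.posSemidef.nonneg
  have hRu : IsUnit R.det := by
    have h := (isUnit_iff_isUnit_det A).mp hA.isUnit
    rw [hR, det_mul] at h
    exact isUnit_of_mul_isUnit_right h
  have hRu' : IsUnit Rᴴ.det := by rw [det_conjTranspose]; exact hRu.star
  have hM : ((R⁻¹)ᴴ * (B - A) * R⁻¹).PosSemidef := hBA.conjTranspose_mul_mul_same R⁻¹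
  have hspec := hM.isHermitian.spectral_theorem
  have hev := hM.eigenvalues_nonneg
  set U : Matrix (Fin n) (Fin n) ℂ := ↑(hM.isHermitian.eigenvectorUnitary) with hU
  set e := hM.isHermitian.eigenvalues with he
  have hUU : U * Uᴴ = 1 := Unitary.coe_mul_star_self hM.isHermitian.eigenvectorUnitary
  have hspec' : (R⁻¹)ᴴ * (B - A) * R⁻¹ = U * diagonal (fun i => (e i : ℂ)) * Uᴴ := hspec
  have hC : B - A = Rᴴ * (U * diagonal (fun i => (e i : ℂ)) * Uᴴ) * R := by
    rw [← hspec', conjTranspose_nonsing_inv]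
    simp only [Matrix.mul_assoc, nonsing_inv_mul _ hRu, Matrix.mul_one]
    rw [← Matrix.mul_assoc, mul_nonsing_inv _ hRu', Matrix.one_mul]
  have hAT : A = Rᴴ * U * (Rᴴ * U)ᴴ := by
    rw [conjTranspose_mul, conjTranspose_conjTranspose, Matrix.mul_assoc, ← Matrix.mul_assoc U,
      hUU, Matrix.one_mul, hR]
  refine ⟨Rᴴ * U, fun i => 1 + e i, ?_, fun i => by linarith [hev i], hAT, ?_⟩
  · rw [det_mul]
    refine hRu'.mul (IsUnit.of_mul_eq_one Uᴴ.det ?_)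
    rw [← det_mul, hUU, det_one]
  · have hD : diagonal (fun i => ((1 + e i : ℝ) : ℂ)) = 1 + diagonal (fun i => (e i : ℂ)) := by
      rw [← diagonal_one, diagonal_add]
      simp
    rw [hD, Matrix.mul_add, Matrix.add_mul, Matrix.mul_one, ← hAT, ← sub_eq_iff_eq_add', hC]
    simp only [conjTranspose_mul, conjTranspose_conjTranspose, Matrix.mul_assoc]

lemma det_conj_diagonal {n : ℕ} (T : Matrix (Fin n) (Fin n) ℂ) (d : Fin n → ℝ) :
    (T * diagonal (fun i => (d i : ℂ)) * Tᴴ).det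
      = ((Complex.normSq T.det * ∏ i, d i : ℝ) : ℂ) := by
  rw [det_mul, det_mul, det_diagonal, det_conjTranspose]
  push_cast
  rw [← Complex.mul_conj, starRingEnd_apply]
  ring

/-- The formula holds for singular `T` as well, both sides being zero under the convention
`T⁻¹ = 0`. -/
lemma trace_inv_conj_diagonal_mul {n : ℕ} (T : Matrix (Fin n) (Fin n) ℂ)
    {d : Fin n → ℝ} (hd : ∀ i, 1 ≤ d i) (H : Matrix (Fin n) (Fin n) ℂ) :
    ((T * diagonal (fun i => (d i : ℂ)) * Tᴴ)⁻¹ * H).trace.re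
      = ∑ i, ((T⁻¹ * H * (T⁻¹)ᴴ) i i).re / d i := by
  have hinv : (diagonal (fun i => (d i : ℂ)))⁻¹ = diagonal (fun i => ((d i)⁻¹ : ℂ)) := by
    refine inv_eq_right_inv ?_
    rw [diagonal_mul_diagonal, ← diagonal_one]
    congr 1
    funext i
    have : (d i : ℂ) ≠ 0 := by exact_mod_cast (by linarith [hd i] : d i ≠ 0)
    exact mul_inv_cancel₀ this
  rw [Matrix.mul_inv_rev, Matrix.mul_inv_rev, hinv, ← conjTranspose_nonsing_inv, Matrix.mul_assoc,
    trace_mul_comm, Matrix.mul_assoc, Matrix.mul_assoc, ← Matrix.mul_assoc T⁻¹, trace]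
  simp only [diag_apply, diagonal_mul, Complex.re_sum]
  refine Finset.sum_congr rfl fun i _ => ?_
  rw [← Complex.ofReal_inv, Complex.re_ofReal_mul, div_eq_inv_mul]

/-- For `n × n` complex Hermitian matrices `A`, `B`, `H` with `A` positive definite,
`B − A` positive semidefinite and `H` positive semidefinite, one has
`Re(tr(A⁻¹ H)) · Re(det A) ≤ Re(tr(B⁻¹ H)) · Re(det B)`. -/
theorem trace_inv_mul_det_mono (n : ℕ) (hn : 1 ≤ n)
    (A B H : Matrix (Fin n) (Fin n) ℂ)
    (hA : A.IsHermitian) (hB : B.IsHermitian) (hH : H.IsHermitian)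
    (hApos : A.PosDef) (hBA : (B - A).PosSemidef) (hHpos : H.PosSemidef) :
    ((A⁻¹ * H).trace).re * (A.det).re ≤ ((B⁻¹ * H).trace).re * (B.det).re := by
  obtain ⟨T, d, hT, hd, hAT, hBT⟩ := exists_simultaneous_diagonalization hApos hBA
  have hAT' : A = T * diagonal (fun _ : Fin n => ((1 : ℝ) : ℂ)) * Tᴴ := by
    simpa using hAT
  have hk : ∀ i, 0 ≤ ((T⁻¹ * H * (T⁻¹)ᴴ) i i).re := fun i =>
    (Complex.le_def.mp (hHpos.mul_mul_conjTranspose_same T⁻¹).diag_nonneg).1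
  rw [hBT, hAT', det_conj_diagonal, det_conj_diagonal,
    trace_inv_conj_diagonal_mul T (fun _ => le_rfl), trace_inv_conj_diagonal_mul T hd,
    Complex.ofReal_re, Complex.ofReal_re, Finset.sum_mul, Finset.sum_mul]
  refine Finset.sum_le_sum fun i _ => ?_
  have hdi : 0 < d i := by linarith [hd i]
  have hle : d i ≤ ∏ j, d j := by
    rw [← Finset.mul_prod_erase _ _ (Finset.mem_univ i)]
    exact le_mul_of_one_le_right hdi.le (Finset.one_le_prod fun j _ => hd j)
  rw [Finset.prod_const_one, div_one, mul_one, div_mul_eq_mul_div, le_div_iff₀ hdi, mul_assoc]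
  exact mul_le_mul_of_nonneg_left
    (mul_le_mul_of_nonneg_left hle (Complex.normSq_nonneg _)) (hk i)
end

section
/- Let f : ℝ → ℝ be continuous and nonnegative on (0,∞), with s ↦ s·f(s) monotone nondecreasing on (0,∞), and suppose f is integrable on (0,t) for every t > 0. If (∫₀^t f(s) ds) / log(2+t) → 0 as t → +∞, then f(t) = 0 for all t > 0. -/
/-!
If `c = a * f a > 0` for some `a > 0`, monotonicity of `s * f s` gives `f s ≥ c / s` on `[a, ∞)`,
hence `∫₀ᵗ f ≥ c * (log t - log a)`. The quotient by `log (2 + t)` then has lower limit at least `c`,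
which is incompatible with its tending to `0`.
-/

open Set MeasureTheory Filter

/-- Logarithmic growth of the primitive; the contribution of `(0, a)` is discarded by
nonnegativity. -/
theorem mul_log_sub_log_le_integral (f : ℝ → ℝ)
    (hf_nonneg : ∀ s ∈ Ioi (0 : ℝ), 0 ≤ f s)
    (hmono : MonotoneOn (fun s => s * f s) (Ioi (0 : ℝ)))
    (hf_int : ∀ t > (0 : ℝ), IntegrableOn f (Ioo 0 t))
    {a t : ℝ} (ha : 0 < a) (hat : a ≤ t) :
    a * f a * (Real.log t - Real.log a) ≤ ∫ s in (0 : ℝ)..t, f s := by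
  have ht : 0 < t := ha.trans_le hat
  have hint : ∀ u > (0 : ℝ), IntervalIntegrable f volume 0 u := fun u hu =>
    (intervalIntegrable_iff_integrableOn_Ioo_of_le hu.le).2 (hf_int u hu)
  have hint' : IntervalIntegrable f volume a t := (hint a ha).symm.trans (hint t ht)
  have h0 : 0 ≤ ∫ s in (0 : ℝ)..a, f s := by
    rw [intervalIntegral.integral_of_le ha.le]
    exact setIntegral_nonneg measurableSet_Ioc fun s hs => hf_nonneg s hs.1
  have hinv : IntervalIntegrable (fun s : ℝ => a * f a * s⁻¹) volume a t := by
    refine (intervalIntegral.intervalIntegrable_inv (fun s hs => ?_) continuousOn_id).const_mul _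
    rw [uIcc_of_le hat] at hs
    exact (ha.trans_le hs.1).ne'
  have h1 : ∫ s in a..t, a * f a * s⁻¹ ≤ ∫ s in a..t, f s := by
    refine intervalIntegral.integral_mono_on hat hinv hint' fun s hs => ?_
    have hs0 : 0 < s := ha.trans_le hs.1
    have h : a * f a ≤ s * f s := hmono ha hs0 hs.1
    rw [← div_eq_mul_inv, div_le_iff₀ hs0]
    linarith
  rw [intervalIntegral.integral_const_mul, integral_inv_of_pos ha ht,
    Real.log_div ht.ne' ha.ne'] at h1
  rw [← intervalIntegral.integral_add_adjacent_intervals (hint a ha) hint']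
  linarith

/-- If `f` is continuous and nonnegative on `(0,∞)`, `s ↦ s·f(s)` is nondecreasing
on `(0,∞)`, `f` is integrable on `(0,t)` for every `t > 0`, and
`(∫₀^t f) / log(2+t) → 0` as `t → ∞`, then `f ≡ 0` on `(0,∞)`. -/
theorem eq_zero_of_integral_div_log_tendsto_zero (f : ℝ → ℝ)
    (hf_cont : ContinuousOn f (Ioi (0 : ℝ)))
    (hf_nonneg : ∀ s ∈ Ioi (0 : ℝ), 0 ≤ f s)
    (hmono : MonotoneOn (fun s => s * f s) (Ioi (0 : ℝ)))
    (hf_int : ∀ t > (0 : ℝ), IntegrableOn f (Ioo 0 t))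
    (hlim : Tendsto (fun t => (∫ s in (0 : ℝ)..t, f s) / Real.log (2 + t))
      atTop (nhds 0)) :
    ∀ t > (0 : ℝ), f t = 0 := by
  intro a ha
  by_contra hne
  have hc : 0 < a * f a := mul_pos ha (lt_of_le_of_ne (hf_nonneg a ha) (Ne.symm hne))
  have hsmall := hlim.eventually (gt_mem_nhds (half_pos hc))
  have hlarge := Real.tendsto_log_atTop.eventually_gt_atTop (2 * Real.log a + Real.log 2)
  obtain ⟨t, hq, hl, hat, h2⟩ :=
    (hsmall.and (hlarge.and ((eventually_ge_atTop a).and (eventually_ge_atTop 2)))).exists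
  have hlog : Real.log (2 + t) ≤ Real.log 2 + Real.log t := by
    rw [← Real.log_mul (by norm_num) (by linarith)]
    exact Real.log_le_log (by linarith) (by linarith)
  rw [div_lt_iff₀ (Real.log_pos (by linarith))] at hq
  have hlow := mul_log_sub_log_le_integral f hf_nonneg hmono hf_int ha hat
  -- The two bounds combine to `log t < 2 * log a + log 2`, against the choice of `t`.
  have hup := mul_le_mul_of_nonneg_left hlog (half_pos hc).le
  have hgap := mul_lt_mul_of_pos_left hl (half_pos hc)
  linarith
end

section
/- Let 0 < ε < 1 and C₀ > 0. Then there exists a constant C > 0, depending only on ε and C₀, with the following property: for every t ≥ 0 and every real number m ≤ 0 satisfying, for all a > 0, m ≥ −C₀·a^{1−ε} − C₀·(1−m)·( t·a^{−(1+ε)} + t·(−m)·a^{−2} ), one has m ≥ −C·(t+1)^{(1−ε)/(1+ε)}. -/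
/-!
Put `u = 1 - m ≥ 1` and `s = t + 1 ≥ 1`, and test the hypothesis with `a = 2 √C₀ · (s u) ^ (1/2)`.
The factor `2 √C₀` makes the term with `a ^ (-2)` at most `-m / 4`, which is absorbed on the left; the
two other terms are both bounded by a constant times `(s u) ^ p`, where `p = (1 - ε) / 2`.
As `1 ≤ (s u) ^ p`, this gives `u ≤ D (s u) ^ p`. Since `p < 1` the power of `u` can be divided out,
so `u ≤ D ^ (1 / (1 - p)) * s ^ (p / (1 - p))`, and `p / (1 - p) = (1 - ε) / (1 + ε)`.
-/

/-- A sublinear inequality `u ≤ D (s u) ^ p`, `p < 1`, bounds `u` explicitly. -/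
lemma le_of_le_mul_rpow {D s u p : ℝ} (hD : 0 < D) (hs : 0 < s) (hu : 0 < u) (hp : p < 1)
    (h : u ≤ D * (s * u) ^ p) : u ≤ D ^ (1 / (1 - p)) * s ^ (p / (1 - p)) := by
  have hq : 0 < 1 - p := by linarith
  have h1 : u ^ (1 - p) ≤ D * s ^ p := by
    rw [Real.rpow_sub hu, Real.rpow_one, div_le_iff₀ (Real.rpow_pos_of_pos hu p), mul_assoc,
      ← Real.mul_rpow hs.le hu.le]
    exact h
  have h2 := Real.rpow_le_rpow (Real.rpow_nonneg hu.le _) h1 (one_div_pos.2 hq).le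
  rw [← Real.rpow_mul hu.le, mul_one_div_cancel hq.ne', Real.rpow_one,
    Real.mul_rpow hD.le (Real.rpow_nonneg hs.le p), ← Real.rpow_mul hs.le, mul_one_div] at h2
  exact h2


/-- Lemma 2.1 (Shi): optimization step. For `0 < ε < 1` and `C₀ > 0` there is a
constant `C > 0` depending only on `ε` and `C₀` such that: for every `t ≥ 0` and
every `m ≤ 0` satisfying
`m ≥ −C₀·a^{1−ε} − C₀·(1−m)·(t·a^{−(1+ε)} + t·(−m)·a^{−2})` for all `a > 0`,
one has `m ≥ −C·(t+1)^{(1−ε)/(1+ε)}`. -/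
theorem optimize_a_priori_estimate (ε C₀ : ℝ) (hε0 : 0 < ε) (hε1 : ε < 1)
    (hC₀ : 0 < C₀) :
    ∃ C > (0 : ℝ), ∀ t ≥ (0 : ℝ), ∀ m ≤ (0 : ℝ),
      (∀ a > (0 : ℝ),
        m ≥ -C₀ * a ^ (1 - ε)
            - C₀ * (1 - m) * (t * a ^ (-(1 + ε)) + t * (-m) * a ^ (-2 : ℝ))) →
      m ≥ -C * (t + 1) ^ ((1 - ε) / (1 + ε)) := by
  obtain ⟨K, hK, hK2⟩ : ∃ K > (0 : ℝ), K ^ (-2 : ℝ) = (4 * C₀)⁻¹ := by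
    refine ⟨√(4 * C₀), by positivity, ?_⟩
    rw [Real.rpow_neg (Real.sqrt_nonneg _), Real.rpow_two, Real.sq_sqrt (by positivity)]
  set K1 := K ^ (1 - ε) with hK1
  set K3 := K ^ (-(1 + ε)) with hK3
  have hK1p : 0 < K1 := Real.rpow_pos_of_pos hK _
  have hK3p : 0 < K3 := Real.rpow_pos_of_pos hK _
  set D := 4 / 3 * (1 + C₀ * K1 + C₀ * K3) with hD
  have hDp : 0 < D := by positivity
  refine ⟨D ^ (1 / (1 - (1 - ε) / 2)), by positivity, fun t ht m hm h => ?_⟩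
  obtain ⟨u, hu⟩ : ∃ u, u = 1 - m := ⟨_, rfl⟩
  obtain ⟨s, hs⟩ : ∃ s, s = t + 1 := ⟨_, rfl⟩
  have hu1 : 1 ≤ u := by linarith
  have hs1 : 1 ≤ s := by linarith
  have hsu : 1 ≤ s * u := one_le_mul_of_one_le_of_one_le hs1 hu1
  have hsu0 : 0 < s * u := by linarith
  set X := (s * u) ^ ((1 - ε) / 2) with hX
  have hX1 : 1 ≤ X := Real.one_le_rpow hsu (by linarith)
  have hr : 0 ≤ (s * u) ^ (1 / 2 : ℝ) := by positivity
  have h0 := h (K * (s * u) ^ (1 / 2 : ℝ)) (by positivity)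
  have e1 : (K * (s * u) ^ (1 / 2 : ℝ)) ^ (1 - ε) = K1 * X := by
    rw [Real.mul_rpow hK.le hr, ← Real.rpow_mul hsu0.le, hX]
    congr 2
    ring
  have e2 : (K * (s * u) ^ (1 / 2 : ℝ)) ^ (-(1 + ε)) = K3 * (X / (s * u)) := by
    rw [Real.mul_rpow hK.le hr, ← Real.rpow_mul hsu0.le, hX, ← Real.rpow_sub_one hsu0.ne']
    congr 2
    ring
  have e3 : (K * (s * u) ^ (1 / 2 : ℝ)) ^ (-2 : ℝ) = (4 * C₀)⁻¹ * (s * u)⁻¹ := by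
    rw [Real.mul_rpow hK.le hr, ← Real.rpow_mul hsu0.le, hK2, ← Real.rpow_neg_one (s * u)]
    norm_num
  rw [e1, e2, e3, ← hu] at h0
  have hs0 : 0 < s := by linarith
  have hu0 : 0 < u := by linarith
  have e4 : C₀ * u * (t * (K3 * (X / (s * u))) + t * (-m) * ((4 * C₀)⁻¹ * (s * u)⁻¹))
      = t / s * (C₀ * K3 * X + -m / 4) := by
    field_simp
  have hts : t / s ≤ 1 := (div_le_one hs0).2 (by linarith)
  have e5 : t / s * (C₀ * K3 * X + -m / 4) ≤ C₀ * K3 * X + -m / 4 :=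
    mul_le_of_le_one_left
      (add_nonneg (by positivity) (div_nonneg (neg_nonneg.2 hm) (by norm_num))) hts
  have key : u ≤ D * X := by
    rw [e4] at h0
    rw [hD]
    linarith
  have hfin := le_of_le_mul_rpow hDp hs0 hu0 (by linarith) key
  have e6 : (1 - ε) / 2 / (1 - (1 - ε) / 2) = (1 - ε) / (1 + ε) := by
    have : 1 - (1 - ε) / 2 = (1 + ε) / 2 := by ring
    rw [this, div_div_div_cancel_right₀ two_ne_zero]
  rw [e6] at hfin
  rw [← hs]
  linarith
end

section
/- Let ε̃ : (0,∞) → (0,∞) be a function with ε̃(a) → 0 as a → +∞, let C > 0, and let m : (0,∞) → ℝ satisfy m(t) ≤ 0 for all t > 0. Suppose that for all t > 0 and all a > 0, m(t) ≥ −2·ε̃(a)·log(a+2) − 2C·(t/a²)·(1 − m(t))². Then m(t)/log(2+t) → 0 as t → +∞. -/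
/-!
Take `a = (2 + t) * (1 - m t)`, so that the last term of the inequality is `2 * C * t / (2 + t) ^ 2`,
which is at most `2 * C`. Since `a ≥ 2`, one has
`log (a + 2) ≤ log (2 * a) ≤ 2 * log (2 + t) + log (1 - m t) ≤ 2 * log (2 + t) - m t`.
As `a ≥ 2 + t`, the factor `εt a` is small for large `t`, so the `-m t` on the right can be absorbed
into the left-hand side, giving `-m t ≤ 8 * εt a * log (2 + t) + 4 * C`. Dividing by `log (2 + t)`
gives the claim.
-/

open Filter

/-- The choice `a = (2 + t) * (1 - m)`, after absorbing the contribution of `log (1 - m)`; here `e`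
stands for the value `εt a`. -/
lemma neg_le_of_ineq {C t m e : ℝ} (hC : 0 < C) (ht : 0 < t) (hm : m ≤ 0)
    (he : 0 < e) (he' : e ≤ 1 / 4)
    (h : m ≥ -2 * e * Real.log ((2 + t) * (1 - m) + 2)
      - 2 * C * (t / ((2 + t) * (1 - m)) ^ 2) * (1 - m) ^ 2) :
    -m ≤ 8 * e * Real.log (2 + t) + 4 * C := by
  have hu : 0 < 1 - m := by linarith
  have hlog : Real.log ((2 + t) * (1 - m) + 2) ≤ 2 * Real.log (2 + t) - m := by
    have h1 : Real.log ((2 + t) * (1 - m) + 2) ≤ Real.log (2 * ((2 + t) * (1 - m))) :=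
      Real.log_le_log (by positivity) (by nlinarith)
    rw [Real.log_mul (by norm_num) (by positivity),
      Real.log_mul (by positivity) hu.ne'] at h1
    have h2 : Real.log 2 ≤ Real.log (2 + t) := Real.log_le_log (by norm_num) (by linarith)
    have h3 := Real.log_le_sub_one_of_pos hu
    linarith
  have hlast : 2 * C * (t / ((2 + t) * (1 - m)) ^ 2) * (1 - m) ^ 2 ≤ 2 * C := by
    have h1 : 2 * C * (t / ((2 + t) * (1 - m)) ^ 2) * (1 - m) ^ 2
        = 2 * C * (t / (2 + t) ^ 2) := by
      field_simp
    have h2 : t / (2 + t) ^ 2 ≤ 1 := by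
      rw [div_le_one (by positivity)]
      nlinarith
    rw [h1]
    nlinarith
  have h4 := mul_le_mul_of_nonneg_left hlog he.le
  have h5 : e * (-m) ≤ 1 / 4 * (-m) := mul_le_mul_of_nonneg_right he' (by linarith)
  linarith

/-- Step (4.6) ⇒ (4.8) of the gap theorem: if `ε̃ > 0` tends to `0` at infinity,
`C > 0`, `m(t) ≤ 0` for `t > 0`, and
`m(t) ≥ −2·ε̃(a)·log(a+2) − 2C·(t/a²)·(1 − m(t))²` for all `t, a > 0`,
then `m(t)/log(2+t) → 0` as `t → ∞`. -/
theorem m_div_log_tendsto_zero (εt : ℝ → ℝ) (C : ℝ) (m : ℝ → ℝ)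
    (hεt_pos : ∀ a > (0 : ℝ), 0 < εt a)
    (hεt_lim : Tendsto εt atTop (nhds 0))
    (hC : 0 < C)
    (hm_nonpos : ∀ t > (0 : ℝ), m t ≤ 0)
    (hineq : ∀ t > (0 : ℝ), ∀ a > (0 : ℝ),
      m t ≥ -2 * εt a * Real.log (a + 2) - 2 * C * (t / a ^ 2) * (1 - m t) ^ 2) :
    Tendsto (fun t => m t / Real.log (2 + t)) atTop (nhds 0) := by
  have hlogtop : Tendsto (fun t : ℝ => Real.log (2 + t)) atTop atTop :=
    Real.tendsto_log_atTop.comp (tendsto_atTop_add_const_left _ _ tendsto_id)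
  rw [Metric.tendsto_nhds]
  intro δ hδ
  have hη : 0 < min (1 / 4) (δ / 16) := by positivity
  obtain ⟨A, hA⟩ := eventually_atTop.1 (hεt_lim.eventually_lt_const hη)
  filter_upwards [eventually_gt_atTop 0, eventually_ge_atTop A,
    hlogtop.eventually_gt_atTop (8 * C / δ)] with t ht htA htL
  have hm := hm_nonpos t ht
  have hL : 0 < Real.log (2 + t) := Real.log_pos (by linarith)
  have ha : 0 < (2 + t) * (1 - m t) := mul_pos (by linarith) (by linarith)
  have hsmall := hA ((2 + t) * (1 - m t)) (by nlinarith)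
  have hmain := neg_le_of_ineq hC ht hm (hεt_pos _ ha)
    (hsmall.le.trans (min_le_left _ _)) (hineq t ht _ ha)
  have hη2 := mul_le_mul_of_nonneg_right (hsmall.le.trans (min_le_right _ _)) hL.le
  rw [div_lt_iff₀ hδ] at htL
  rw [Real.dist_eq, sub_zero, abs_div, abs_of_nonpos hm, abs_of_pos hL, div_lt_iff₀ hL]
  linarith
end
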